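/- Let q = 2^h, h > p, and r ≥ p. The code ZRM_{2^h}^p(r,m) is a Z_{2^h}-linear code of length 2^m and its cardinality satisfies log_2 |ZRM_{2^h}^p(r,m)| = Σ_{i=0}^{r-p} h·C(m,i) + Σ_{i=1}^{p} (h-i)·C(m, i+r-p), where C(m,i) denotes the binomial coefficient. -/

import Mathlib

open Finset

/-- The binary expansion of `i`, as a point of `ℤ₂^m`. -/
def bits (m : ℕ) (i : ℕ) : Fin m → ZMod 2 := fun j => if Nat.testBit i j.val then 1 else 0

/-- Admissibility condition on ANF coefficients for `ZRM_{2^h}^p(r,m)`: monomials of order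
at most `r - p` are free, a monomial of order `r - p + i` (for `1 ≤ i ≤ p`) must carry a
coefficient divisible by `2^i`, and monomials of order exceeding `r` do not occur. -/
def zrmCond (h p r m : ℕ) (c : Finset (Fin m) → ZMod (2 ^ h)) : Prop :=
  ∀ S : Finset (Fin m),
    (r < S.card → c S = 0) ∧
    (r - p < S.card → S.card ≤ r →
      ∃ u : ZMod (2 ^ h), c S = 2 ^ (S.card - (r - p)) * u)

/-- The `ℤ_{2^h}`-valued vector of length `2^m` associated with the generalized Boolean
function whose algebraic normal form has coefficients `c` (indexed by monomials, i.e. by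
subsets of the variables). -/
def anfVec (h m : ℕ) (c : Finset (Fin m) → ZMod (2 ^ h)) : Fin (2 ^ m) → ZMod (2 ^ h) :=
  fun i => ∑ S : Finset (Fin m), c S * ∏ α ∈ S, ((bits m i.val α).val : ZMod (2 ^ h))

/-- The code `ZRM_{2^h}^p(r,m)` as a set of vectors of length `2^m` over `ℤ_{2^h}`. -/
def ZRM (h p r m : ℕ) : Set (Fin (2 ^ m) → ZMod (2 ^ h)) :=
  {v | ∃ c : Finset (Fin m) → ZMod (2 ^ h), zrmCond h p r m c ∧ v = anfVec h m c}

/-!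
At the point of `ℤ₂^m` with support `A`, a generalized Boolean function takes the value
`∑ S ⊆ A, c S`, so Möbius inversion on the lattice of subsets recovers the coefficients `c` from
the word. Hence the code is a linear copy of the product of its coefficient ideals. For a monomial
of order `k ≤ r` this ideal is generated by `2^(k - (r-p))`, truncated subtraction making it the
whole ring when `k ≤ r - p`, and it has `2^(h - (k - (r-p)))` elements.
-/

theorem card_span_natCast_zmod {n : ℕ} (hn : n ≠ 0) (d : ℕ) :
    Nat.card (Ideal.span {(d : ZMod n)}) = n / n.gcd d := by
  have hspan : ((Ideal.span {(d : ZMod n)} : Ideal (ZMod n)) : Set (ZMod n)) =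
      AddSubgroup.zmultiples (d : ZMod n) := by
    ext x
    simp only [SetLike.mem_coe, Ideal.mem_span_singleton', AddSubgroup.mem_zmultiples_iff,
      (ZMod.intCast_surjective (n := n)).exists, zsmul_eq_mul]
  exact (Nat.card_congr (Equiv.setCongr hspan)).trans <|
    (Nat.card_zmultiples (d : ZMod n)).trans (ZMod.addOrderOf_coe d hn)

theorem card_span_pow_zmod {b h j : ℕ} (hb : b ≠ 0) (hj : j ≤ h) :
    Nat.card (Ideal.span {(b ^ j : ZMod (b ^ h))}) = b ^ (h - j) := by
  have hcard := card_span_natCast_zmod (pow_ne_zero h hb) (b ^ j)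
  rwa [Nat.gcd_eq_right (pow_dvd_pow b hj), Nat.pow_div hj (Nat.pos_of_ne_zero hb),
    Nat.cast_pow] at hcard

theorem sum_ite_card_le {α M : Type*} [Fintype α] [AddCommMonoid M] (f : ℕ → M) (r : ℕ) :
    ∑ S : Finset α, (if #S ≤ r then f #S else 0) =
      ∑ k ∈ range (r + 1), (Fintype.card α).choose k • f k := by
  rw [← powerset_univ, sum_powerset_apply_card (fun k => if k ≤ r then f k else 0), card_univ]
  refine sum_congr_of_eq_on_inter (fun k _ hk => ?_) (fun k _ hk => ?_) (fun k _ hk => ?_)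
  · simp only [mem_range, Nat.lt_succ_iff] at hk
    rw [if_neg hk, smul_zero]
  · simp only [mem_range, Nat.lt_succ_iff, not_le] at hk
    rw [Nat.choose_eq_zero_of_lt hk, zero_smul]
  · rw [if_pos (Nat.lt_succ_iff.mp (mem_range.mp hk))]

theorem sum_range_eq_sum_range_add_sum_Icc {M : Type*} [AddCommMonoid M] (f : ℕ → M) (s p : ℕ) :
    ∑ k ∈ range (s + p + 1), f k = ∑ k ∈ range (s + 1), f k + ∑ i ∈ Icc 1 p, f (i + s) := by
  rw [← sum_range_add_sum_Ico f (by omega : s + 1 ≤ s + p + 1), ← Ico_add_one_right_eq_Icc,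
    sum_Ico_add', add_comm 1 s, add_right_comm p 1 s, add_comm p s]

theorem sum_Iic_injective {ι R : Type*} [PartialOrder ι] [OrderBot ι] [LocallyFiniteOrder ι]
    [Ring R] :
    Function.Injective fun (f : ι → R) (x : ι) => ∑ y ∈ Iic x, f y := by
  classical
  intro f g hfg
  funext x
  rw [IncidenceAlgebra.moebius_inversion_bot f _ (fun _ => rfl) x,
    IncidenceAlgebra.moebius_inversion_bot g _ (fun _ => rfl) x]
  exact sum_congr rfl fun y _ => congrArg (_ * ·) (congrFun hfg y)

/-- The positions of the binary digits `1` of `i` among the lowest `m`. The monomials that do not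
vanish at the point `bits m i` are those whose variables all lie in this set. -/
def bitSupport (m i : ℕ) : Finset (Fin m) := {α | i.testBit α}

theorem exists_bitSupport_eq {m : ℕ} (S : Finset (Fin m)) :
    ∃ i : Fin (2 ^ m), bitSupport m i = S :=
  ⟨⟨Nat.ofBits fun α => decide (α ∈ S), Nat.ofBits_lt_two_pow _⟩, by
    ext α
    simp [bitSupport, Nat.testBit_ofBits_lt]⟩

theorem cast_val_bits {R : Type*} [Semiring R] (m i : ℕ) (α : Fin m) :
    ((bits m i α).val : R) = if α ∈ bitSupport m i then 1 else 0 := by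
  by_cases hα : i.testBit α <;> simp [bits, bitSupport, hα, ZMod.val_one]

theorem anfVec_apply {h m : ℕ} (c : Finset (Fin m) → ZMod (2 ^ h)) (i : Fin (2 ^ m)) :
    anfVec h m c i = ∑ S ∈ Iic (bitSupport m i), c S := by
  simp only [anfVec, cast_val_bits, prod_ite_zero, prod_const_one, mul_ite, mul_one, mul_zero,
    ← sum_filter]
  congr 1
  ext S
  simp [subset_iff]

theorem anfVec_injective (h m : ℕ) : Function.Injective (anfVec h m) := by
  intro c d hcd
  refine sum_Iic_injective (funext fun S => ?_)
  obtain ⟨i, rfl⟩ := exists_bitSupport_eq S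
  simpa only [anfVec_apply] using congrFun hcd i

/-- `anfVec` as a linear map from algebraic normal forms to words of length `2^m`. -/
def anfLinearMap (h m : ℕ) :
    (Finset (Fin m) → ZMod (2 ^ h)) →ₗ[ZMod (2 ^ h)] (Fin (2 ^ m) → ZMod (2 ^ h)) where
  toFun := anfVec h m
  map_add' c d := by
    funext i
    simp only [anfVec_apply, Pi.add_apply, sum_add_distrib]
  map_smul' s c := by
    funext i
    simp only [anfVec_apply, Pi.smul_apply, smul_sum, RingHom.id_apply]

/-- The linear code of all words whose algebraic normal form has, for each set of variables `S`,
its coefficient at the monomial `S` in the prescribed ideal `I S`. -/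
def anfCode {h m : ℕ} (I : Finset (Fin m) → Ideal (ZMod (2 ^ h))) :
    Submodule (ZMod (2 ^ h)) (Fin (2 ^ m) → ZMod (2 ^ h)) :=
  (Submodule.pi Set.univ I).map (anfLinearMap h m)

theorem card_anfCode {h m : ℕ} (I : Finset (Fin m) → Ideal (ZMod (2 ^ h))) :
    Nat.card (anfCode I) = ∏ S, Nat.card (I S) :=
  calc Nat.card (anfCode I)
      = Nat.card (Submodule.pi Set.univ I) :=
        Nat.card_image_of_injective (anfVec_injective h m) _
    _ = Nat.card (∀ S, I S) := Nat.card_congr (Equiv.Set.univPi fun S => (I S : Set (ZMod (2 ^ h))))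
    _ = ∏ S, Nat.card (I S) := Nat.card_pi

/-- The ideal of admissible coefficients of a monomial of order `k` in `ZRM_{2^h}^p(r,m)`. -/
def zrmIdeal (h p r k : ℕ) : Ideal (ZMod (2 ^ h)) :=
  if k ≤ r then Ideal.span {2 ^ (k - (r - p))} else ⊥

theorem zrmCond_iff_mem_zrmIdeal {h p r m : ℕ} {c : Finset (Fin m) → ZMod (2 ^ h)} :
    zrmCond h p r m c ↔ ∀ S, c S ∈ zrmIdeal h p r #S := by
  refine forall_congr' fun S => ?_
  by_cases hr : #S ≤ r
  · rw [zrmIdeal, if_pos hr, Ideal.mem_span_singleton, dvd_def]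
    by_cases hp : #S ≤ r - p
    · simp [hr.not_gt, hp]
    · simp [hr.not_gt, hr, not_le.mp hp]
  · simp [zrmIdeal, hr, not_le.mp hr]

theorem ZRM_eq_anfCode (h p r m : ℕ) :
    ZRM h p r m = anfCode fun S : Finset (Fin m) => zrmIdeal h p r #S := by
  ext v
  simp only [ZRM, anfCode, zrmCond_iff_mem_zrmIdeal, Set.mem_ofPred_eq, Submodule.map_coe,
    Set.mem_image, SetLike.mem_coe, Submodule.mem_pi, Set.mem_univ, true_imp_iff,
    eq_comm (a := v)]
  rfl

theorem card_zrmIdeal {h p : ℕ} (hph : p ≤ h) (r k : ℕ) :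
    Nat.card (zrmIdeal h p r k) = 2 ^ (if k ≤ r then h - (k - (r - p)) else 0) := by
  unfold zrmIdeal
  split_ifs with hk
  · exact_mod_cast card_span_pow_zmod two_ne_zero (by omega : k - (r - p) ≤ h)
  · simp

/-- `ZRM_{2^h}^p(r,m)` is a linear code over `ℤ_{2^h}` of length `2^m`, and
`log₂ |ZRM_{2^h}^p(r,m)| = ∑_{i=0}^{r-p} h·C(m,i) + ∑_{i=1}^{p} (h-i)·C(m,i+r-p)`. -/
theorem stmt_5 (h p r m : ℕ) (hph : p < h) (hpr : p ≤ r) :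
    (∀ u ∈ ZRM h p r m, ∀ v ∈ ZRM h p r m, u + v ∈ ZRM h p r m) ∧
    (∀ s : ZMod (2 ^ h), ∀ v ∈ ZRM h p r m, s • v ∈ ZRM h p r m) ∧
    Nat.card (ZRM h p r m) =
      2 ^ (∑ i ∈ Finset.range (r - p + 1), h * m.choose i
            + ∑ i ∈ Finset.Icc 1 p, (h - i) * m.choose (i + (r - p))) := by
  rw [ZRM_eq_anfCode]
  refine ⟨fun u hu v hv => Submodule.add_mem _ hu hv, fun s v hv => Submodule.smul_mem _ s hv, ?_⟩
  calc Nat.card (anfCode fun S : Finset (Fin m) => zrmIdeal h p r #S)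
      = 2 ^ ∑ S : Finset (Fin m), if #S ≤ r then h - (#S - (r - p)) else 0 := by
        simp only [card_anfCode, card_zrmIdeal hph.le, prod_pow_eq_pow_sum]
    _ = 2 ^ ∑ k ∈ range (r - p + p + 1), (h - (k - (r - p))) * m.choose k := by
        simp only [sum_ite_card_le fun k => h - (k - (r - p)), Fintype.card_fin,
          Nat.sub_add_cancel hpr, smul_eq_mul, mul_comm]
    _ = _ := by
        rw [sum_range_eq_sum_range_add_sum_Icc]
        simp only [Nat.add_sub_cancel]
        congr 2
        refine sum_congr rfl fun k hk => ?_
        have hk_le : k ≤ r - p := Nat.lt_succ_iff.mp (mem_range.mp hk)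
        rw [Nat.sub_eq_zero_of_le hk_le, Nat.sub_zero]
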